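/- Let q be an odd prime power. The number of N ∈ F_{q³} such that (N^{q²+q+1} − N − N^q − N^{q²})² + 8N^{q²+q+1} − 4(N^{q+1} + N^{q²+1} + N^{q²+q}) is a nonzero square in F_q equals (q³ − q² − q − 3)/2. -/

import Mathlib

/-- count of the split ternary quadric -/
lemma aux_count {K : Type*} [Field K] [Fintype K] (h2 : (2:K) ≠ 0) :
    Nat.card {t : K × K × K | t.2.1 ^ 2 - 4 * t.1 * t.2.2 = 1} =
      Fintype.card K ^ 2 + Fintype.card K := by
  classical
  have h4 : (4:K) ≠ 0 := by
    have : (4:K) = 2 * 2 := by norm_num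
    rw [this]; exact mul_ne_zero h2 h2
  have hne : (1:K) ≠ -1 := by
    intro h; apply h2; linear_combination h
  let e : {t : K × K × K | t.2.1 ^ 2 - 4 * t.1 * t.2.2 = 1} ≃ (Kˣ × K) ⊕ (({1, -1} : Finset K) × K) :=
    { toFun := fun t => if h : t.1.1 = 0 then Sum.inr (⟨t.1.2.1, by
          have := t.2
          simp only [Set.mem_ofPred_eq, h] at this
          have h' : (t.1.2.1 - 1) * (t.1.2.1 + 1) = 0 := by linear_combination this
          rcases mul_eq_zero.1 h' with h' | h'
          · simp [sub_eq_zero.1 h']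
          · simp [eq_neg_of_add_eq_zero_left h']⟩, t.1.2.2)
        else Sum.inl (Units.mk0 _ h, t.1.2.1)
      invFun := fun s => match s with
        | Sum.inl (a, b) => ⟨(a, b, (b^2-1)/(4*a)), by
            have := a.ne_zero
            simp only [Set.mem_ofPred_eq]; field_simp; ring⟩
        | Sum.inr (b, c) => ⟨(0, b, c), by
            have := b.2
            simp only [Finset.mem_insert, Finset.mem_singleton] at this
            rcases this with h | h <;> simp [h]⟩
      left_inv := by
        rintro ⟨⟨a, b, c⟩, h⟩
        simp only [Set.mem_ofPred_eq] at h
        by_cases ha : a = 0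
        · simp [ha]
        · simp only [ha, dite_false]
          ext <;> simp
          field_simp; linear_combination h
      right_inv := by
        rintro (⟨a, b⟩ | ⟨b, c⟩)
        · simp
        · simp }
  rw [Nat.card_congr e, Nat.card_sum, Nat.card_prod, Nat.card_prod, Nat.card_units]
  simp only [Nat.card_eq_fintype_card, Fintype.card_coe]
  rw [Finset.card_pair hne]
  have := Fintype.card_pos (α := K)
  obtain ⟨k, hk⟩ : ∃ k, Fintype.card K = k + 1 := ⟨_, (Nat.succ_pred_eq_of_pos this).symm⟩
  rw [hk]; simp; ring


/-- ternary form -/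
def auxR {L : Type*} [Field L] (x y z : L) : L := x^2+y^2+z^2-2*(x*y+y*z+x*z)

/-- the discriminant -/
def auxD {L : Type*} [Field L] (x y z : L) : L :=
  (x*y*z - x - y - z)^2 + 8*(x*y*z) - 4*(x*y+x*z+y*z)

lemma auxD_eq {L : Type*} [Field L] (x y z : L) (hx : x ≠ 1) (hy : y ≠ 1) (hz : z ≠ 1) :
    auxR (1+(x-1)⁻¹) (1+(y-1)⁻¹) (1+(z-1)⁻¹)
      + 4*((1+(x-1)⁻¹) * (1+(y-1)⁻¹) * (1+(z-1)⁻¹)) =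
    auxD x y z * ((x-1)⁻¹ * (y-1)⁻¹ * (z-1)⁻¹)^2 := by
  have hx := sub_ne_zero.2 hx
  have hy := sub_ne_zero.2 hy
  have hz := sub_ne_zero.2 hz
  unfold auxR auxD
  field_simp
  ring

lemma aux_equiv1 {L : Type*} [Field L] (σ : L →+* L) (h3 : ∀ x, σ (σ (σ x)) = x) :
    Nat.card {p : L × L | σ p.2 = p.2 ∧ p.2 ≠ 0 ∧ p.2^2 = auxD p.1 (σ p.1) (σ (σ p.1))} =
    Nat.card {p : L × L | p.1 ≠ 1 ∧ σ p.2 = p.2 ∧ p.2 ≠ 0 ∧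
      p.2^2 = auxR p.1 (σ p.1) (σ (σ p.1)) + 4 * (p.1 * σ p.1 * σ (σ p.1))} := by
  have hne : ∀ x : L, x ≠ 1 → σ x ≠ 1 := fun x hx h => hx (σ.injective (by simpa using h))
  have hne1 : ∀ p : L × L, p.2 ≠ 0 → p.2^2 = auxD p.1 (σ p.1) (σ (σ p.1)) → p.1 ≠ 1 := by
    intro p h0 h h1
    apply h0
    rw [h1] at h
    simp only [map_one, auxD] at h
    exact pow_eq_zero_iff (two_ne_zero) |>.1 (h.trans (by ring))
  refine Nat.card_congr ⟨fun p => ⟨(1 + (p.1.1-1)⁻¹, p.1.2 * ((p.1.1-1)⁻¹ * (σ p.1.1-1)⁻¹ * (σ (σ p.1.1)-1)⁻¹)), ?_⟩,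
    fun p => ⟨(1 + (p.1.1-1)⁻¹, p.1.2 * ((p.1.1-1)⁻¹ * (σ p.1.1-1)⁻¹ * (σ (σ p.1.1)-1)⁻¹)), ?_⟩, ?_, ?_⟩
  · obtain ⟨⟨x, u⟩, hu, h0, h⟩ := p
    have h1 := hne1 _ h0 h
    simp only at hu h0 h h1 ⊢
    have hy := hne _ h1
    have hz := hne _ hy
    refine ⟨?_, ?_, ?_, ?_⟩
    · simpa [sub_eq_zero] using h1
    · simp [hu, h3]; left; ring
    · have hx := sub_ne_zero.2 h1
      have hy := sub_ne_zero.2 hy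
      have hz := sub_ne_zero.2 hz
      positivity
    · simp only [map_add, map_one, map_inv₀, map_sub]
      rw [auxD_eq _ _ _ h1 hy hz, ← h]; ring
  · obtain ⟨⟨x, u⟩, h1, hu, h0, h⟩ := p
    simp only at hu h0 h h1 ⊢
    have hy := hne _ h1
    have hz := hne _ hy
    have hx' := sub_ne_zero.2 h1
    have hy' := sub_ne_zero.2 hy
    have hz' := sub_ne_zero.2 hz
    refine ⟨?_, ?_, ?_⟩
    · simp [hu, h3]; left; ring
    · positivity
    · simp only [map_add, map_one, map_inv₀, map_sub]
      have := auxD_eq (1+(x-1)⁻¹) (1+(σ x-1)⁻¹) (1+(σ (σ x)-1)⁻¹) (by simpa using hx') (by simpa using hy') (by simpa using hz')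
      simp only [add_sub_cancel_left, inv_inv, add_sub_cancel] at this
      rw [mul_pow, h, this]
      field_simp
  · rintro ⟨⟨x, u⟩, hu, h0, h⟩
    have h1 := hne1 _ h0 h
    simp only at hu h0 h h1 ⊢
    have hy := hne _ h1
    have hz := hne _ hy
    have hx' := sub_ne_zero.2 h1
    have hy' := sub_ne_zero.2 hy
    have hz' := sub_ne_zero.2 hz
    ext
    · simp
    · simp; field_simp
  · rintro ⟨⟨x, u⟩, h1, hu, h0, h⟩
    simp only at hu h0 h h1 ⊢
    have hy := hne _ h1
    have hz := hne _ hy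
    have hx' := sub_ne_zero.2 h1
    have hy' := sub_ne_zero.2 hy
    have hz' := sub_ne_zero.2 hz
    ext
    · simp
    · simp; field_simp

lemma aux_equiv2 {L : Type*} [Field L] (h4 : (4:L) ≠ 0) (σ : L →+* L) (h3 : ∀ x, σ (σ (σ x)) = x) :
    Nat.card {p : L × L | p.1 ≠ 1 ∧ σ p.2 = p.2 ∧ p.2 ≠ 0 ∧
      p.2^2 = auxR p.1 (σ p.1) (σ (σ p.1)) + 4 * (p.1 * σ p.1 * σ (σ p.1))} =
    Nat.card {a : L | auxR a (σ a) (σ (σ a)) ≠ 1 ∧ a ≠ 0 ∧ a ≠ 1 ∧ a ≠ -1} := by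
  have hne : ∀ x : L, x ≠ 0 → σ x ≠ 0 := fun x hx h => hx (σ.injective (by simpa using h))
  have key : ∀ b l : L, σ l = l → l ≠ 0 → l^2 = auxR b (σ b) (σ (σ b)) + 4 * (b * σ b * σ (σ b)) →
      b ≠ 0 ∧ 1 = auxR (b/l) (σ (b/l)) (σ (σ (b/l))) + 4 * l * ((b/l) * σ (b/l) * σ (σ (b/l))) := by
    intro b l hl h0 h
    constructor
    · rintro rfl
      apply h0
      simpa [auxR] using h
    · simp only [map_div₀, hl]
      unfold auxR at *
      field_simp
      linear_combination h
  refine Nat.card_congr ⟨fun p => ⟨p.1.1 / p.1.2, ?_⟩,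
    fun a => ⟨((1 - auxR a.1 (σ a) (σ (σ a)))/(4*(a.1 * σ a * σ (σ a))) * a,
      (1 - auxR a.1 (σ a) (σ (σ a)))/(4*(a.1 * σ a * σ (σ a)))), ?_⟩, ?_, ?_⟩
  · obtain ⟨⟨b, l⟩, h1, hl, h0, h⟩ := p
    simp only at hl h0 h h1 ⊢
    obtain ⟨hb, hk⟩ := key b l hl h0 h
    have hc := div_ne_zero hb h0
    have hc1 := hne _ hc
    have hc2 := hne _ hc1
    refine ⟨?_, hc, ?_, ?_⟩
    · intro hR
      rw [hR] at hk
      have : 4 * l * ((b/l) * σ (b/l) * σ (σ (b/l))) = 0 := by linear_combination -hk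
      revert this
      exact mul_ne_zero (mul_ne_zero h4 h0) (mul_ne_zero (mul_ne_zero hc hc1) hc2)
    · intro hc
      rw [hc] at hk
      simp only [auxR, map_one] at hk
      have : 4 * (l - 1) = 0 := by linear_combination -hk
      have := (mul_eq_zero.1 this).resolve_left h4
      rw [div_eq_one_iff_eq h0] at hc
      exact h1 (by linear_combination hc + this)
    · intro hc
      rw [hc] at hk
      simp only [auxR, map_one, map_neg] at hk
      have : 4 * (l + 1) = 0 := by linear_combination hk
      have := (mul_eq_zero.1 this).resolve_left h4
      rw [div_eq_iff h0] at hc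
      exact h1 (by linear_combination hc - this)
  · obtain ⟨a, hR, h0, h1, h1'⟩ := a
    simp only
    have hc1 := hne _ h0
    have hc2 := hne _ hc1
    have hn : 4*(a * σ a * σ (σ a)) ≠ 0 := mul_ne_zero h4 (mul_ne_zero (mul_ne_zero h0 hc1) hc2)
    obtain ⟨l, hl⟩ : ∃ l, l = (1 - auxR a (σ a) (σ (σ a)))/(4*(a * σ a * σ (σ a))) := ⟨_, rfl⟩
    have hσ : σ l = l := by
      rw [hl]
      simp only [auxR, map_div₀, map_sub, map_mul, map_add, map_pow, h3, map_one, map_ofNat]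
      congr 1 <;> ring
    rw [← hl]
    have hl0 : l ≠ 0 := by
      rw [hl]; exact div_ne_zero (sub_ne_zero.2 (Ne.symm hR)) hn
    rw [eq_div_iff hn] at hl
    refine ⟨?_, hσ, hl0, ?_⟩
    · simp only
      intro hla
      have ha : σ a = a := by
        have : l * σ a = l * a := by
          rw [hla]; conv_lhs => rw [← hσ]
          rw [← map_mul, hla, map_one]
        exact mul_left_cancel₀ hl0 this
      simp only [ha, auxR] at hl
      have : (a-1)*(a+1) = 0 := by linear_combination hl - 4*a^2*hla
      rcases mul_eq_zero.1 this with h | h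
      · exact h1 (by linear_combination h)
      · exact h1' (by linear_combination h)
    · simp only [map_mul, hσ]
      simp only [auxR] at hl ⊢
      linear_combination -l^2 * hl
  · rintro ⟨⟨b, l⟩, h1, hl, h0, h⟩
    simp only at hl h0 h h1 ⊢
    obtain ⟨hb, hk⟩ := key b l hl h0 h
    have hc := div_ne_zero hb h0
    have hc1 := hne _ hc
    have hc2 := hne _ hc1
    have hn := mul_ne_zero h4 (mul_ne_zero (mul_ne_zero hc hc1) hc2)
    have hl' : (1 - auxR (b/l) (σ (b/l)) (σ (σ (b/l))))/(4*((b/l) * σ (b/l) * σ (σ (b/l)))) = l := by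
      rw [div_eq_iff hn]; linear_combination hk
    ext
    · simp only [hl']; field_simp
    · simp only [hl']
  · rintro ⟨a, hR, h0, h1, h1'⟩
    have hc1 := hne _ h0
    have hc2 := hne _ hc1
    have hn : 4*(a * σ a * σ (σ a)) ≠ 0 := mul_ne_zero h4 (mul_ne_zero (mul_ne_zero h0 hc1) hc2)
    have hl0 := div_ne_zero (sub_ne_zero.2 (Ne.symm hR)) hn
    ext
    simp only
    exact mul_div_cancel_left₀ _ hl0

lemma aux_R {K L : Type*} [Field K] [Fintype K] [Field L] [Fintype L] [Algebra K L]
    (h2 : (2:K) ≠ 0) (σ : L →ₐ[K] L) (h3 : ∀ x, σ (σ (σ x)) = x)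
    (hfix : ∀ x, σ x = x → ∃ k, algebraMap K L k = x) (hcard : Fintype.card L = Fintype.card K ^ 3) :
    Nat.card {a : L | auxR a (σ a) (σ (σ a)) = 1} = Fintype.card K ^ 2 + Fintype.card K := by
  rw [← aux_count h2]
  have hq : 1 < Fintype.card K := Fintype.one_lt_card
  obtain ⟨x, hx⟩ : ∃ x : L, σ x ≠ x := by
    by_contra! hcon
    have hs : Function.Surjective (algebraMap K L) := fun x => hfix x (hcon x)
    have := Fintype.card_le_of_surjective _ hs
    rw [hcard] at this
    nlinarith [Nat.pow_lt_pow_right hq (show 1 < 3 by norm_num)]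
  obtain ⟨y, hy⟩ : ∃ y, y = σ x := ⟨_, rfl⟩
  obtain ⟨z, hz⟩ : ∃ z, z = σ y := ⟨_, rfl⟩
  have hzx : σ z = x := by rw [hz, hy, h3]
  have hyx : y - x ≠ 0 := by rw [hy]; exact sub_ne_zero.2 hx
  have hzy : z - y ≠ 0 := by
    intro h; apply hyx; apply σ.toRingHom.injective
    simpa [← hy, ← hz] using h
  have hxz : x - z ≠ 0 := by
    intro h; apply hzy; apply σ.toRingHom.injective
    simpa [← hy, ← hz, hzx] using h
  let d := (y-x)*(z-y)*(x-z)
  have hd : d ≠ 0 := mul_ne_zero (mul_ne_zero hyx hzy) hxz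
  have hσd : σ d = d := by
    simp only [d, map_mul, map_sub, ← hy, ← hz, hzx]; ring
  let f : K × K × K → L := fun t => (y-x)^2 / d *
    (algebraMap K L t.1 + (x+y) * algebraMap K L t.2.1 + (x+y)^2 * algebraMap K L t.2.2)
  have hf1 : ∀ t, σ (f t) = (z-y)^2 / d *
    (algebraMap K L t.1 + (y+z) * algebraMap K L t.2.1 + (y+z)^2 * algebraMap K L t.2.2) := by
    intro t
    simp [f, ← hy, ← hz, hσd]
  have hf2 : ∀ t, σ (σ (f t)) = (x-z)^2 / d *
    (algebraMap K L t.1 + (z+x) * algebraMap K L t.2.1 + (z+x)^2 * algebraMap K L t.2.2) := by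
    intro t
    rw [hf1]
    simp [← hz, hσd, hzx]
  have hinj : Function.Injective f := by
    intro s t h
    have h' : ∀ m c : L, m ≠ 0 → m^2/d * (algebraMap K L s.1 + c * algebraMap K L s.2.1 + c^2 * algebraMap K L s.2.2)
        = m^2/d * (algebraMap K L t.1 + c * algebraMap K L t.2.1 + c^2 * algebraMap K L t.2.2) →
        (algebraMap K L s.1 + c * algebraMap K L s.2.1 + c^2 * algebraMap K L s.2.2) =
        (algebraMap K L t.1 + c * algebraMap K L t.2.1 + c^2 * algebraMap K L t.2.2) :=
      fun m c hm h => mul_left_cancel₀ (div_ne_zero (pow_ne_zero 2 hm) hd) h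
    have e1 := h' _ _ hyx h
    have e2 := h' _ _ hzy (by rw [← hf1, ← hf1, h])
    have e3 := h' _ _ hxz (by rw [← hf2, ← hf2, h])
    have inj := (algebraMap K L).injective
    have g2 : algebraMap K L s.2.2 = algebraMap K L t.2.2 := by
      apply mul_left_cancel₀ hd
      simp only [d]
      linear_combination -(y-x) * e1 - (z-y) * e2 - (x-z) * e3
    have g1 : algebraMap K L s.2.1 = algebraMap K L t.2.1 := by
      rw [g2] at e1 e2
      apply mul_left_cancel₀ hxz
      linear_combination e1 - e2
    have g0 : algebraMap K L s.1 = algebraMap K L t.1 := by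
      rw [g2, g1] at e1
      linear_combination e1
    exact Prod.ext (inj g0) (Prod.ext (inj g1) (inj g2))
  have hbij : Function.Bijective f := by
    rw [Fintype.bijective_iff_injective_and_card]
    refine ⟨hinj, ?_⟩
    rw [hcard]; simp; ring
  symm
  refine Nat.card_congr ((Equiv.ofBijective f hbij).subtypeEquiv ?_)
  intro t
  simp only [Set.mem_ofPred_eq, Equiv.ofBijective_apply]
  have : auxR (f t) (σ (f t)) (σ (σ (f t))) = algebraMap K L (t.2.1 ^ 2 - 4 * t.1 * t.2.2) := by
    rw [hf2, hf1]
    simp only [f, auxR, map_sub, map_mul, map_pow, map_ofNat, d]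
    field_simp
    ring
  change _ ↔ auxR (f t) (σ (f t)) (σ (σ (f t))) = 1
  rw [this, ← map_one (algebraMap K L)]
  exact (algebraMap K L).injective.eq_iff.symm

lemma aux_fix {K L : Type*} [Field K] [Fintype K] [Field L] [Algebra K L]
    (x : L) (hx : x ^ Fintype.card K = x) : ∃ k, algebraMap K L k = x := by
  classical
  open Polynomial in
  have hq : 1 < Fintype.card K := Fintype.one_lt_card
  have hne := FiniteField.X_pow_card_sub_X_ne_zero L hq
  have hsub : (Finset.univ.image (algebraMap K L)) ⊆ (X ^ Fintype.card K - X : L[X]).roots.toFinset := by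
    intro y hy
    obtain ⟨k, -, rfl⟩ := Finset.mem_image.1 hy
    rw [Multiset.mem_toFinset, mem_roots hne]
    simp [← map_pow, FiniteField.pow_card]
  have heq := Finset.eq_of_subset_of_card_le hsub (by
    rw [Finset.card_image_of_injective _ (algebraMap K L).injective, Finset.card_univ]
    refine (Multiset.toFinset_card_le _).trans ((card_roots' _).trans ?_)
    rw [FiniteField.X_pow_card_sub_X_natDegree_eq L hq])
  have hxm : x ∈ (X ^ Fintype.card K - X : L[X]).roots.toFinset := by
    rw [Multiset.mem_toFinset, mem_roots hne]
    simp [hx]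
  rw [← heq] at hxm
  obtain ⟨k, -, h⟩ := Finset.mem_image.1 hxm
  exact ⟨k, h⟩

/-- For `q` an odd prime power, the number of `N ∈ F_{q³}` such that
`(N^{q²+q+1} − N − N^q − N^{q²})² + 8N^{q²+q+1} − 4(N^{q+1} + N^{q²+1} + N^{q²+q})`
is a nonzero square in `F_q` equals `(q³−q²−q−3)/2`. -/
theorem stmt8 (p n q : ℕ) [Fact p.Prime] (hn : 0 < n) (hq : q = p ^ n) (hodd : Odd q)
    (K L : Type*) [Field K] [Fintype K] [Field L] [Fintype L] [Algebra K L]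
    (hK : Fintype.card K = q) (hL : Fintype.card L = q ^ 3) :
    Nat.card {N : L | ∃ u : K, u ≠ 0 ∧
      algebraMap K L (u ^ 2) =
        (N ^ (q ^ 2 + q + 1) - N - N ^ q - N ^ (q ^ 2)) ^ 2 + 8 * N ^ (q ^ 2 + q + 1) -
          4 * (N ^ (q + 1) + N ^ (q ^ 2 + 1) + N ^ (q ^ 2 + q))} =
      (q ^ 3 - q ^ 2 - q - 3) / 2 := by
  classical
  have h2 : (2:K) ≠ 0 := by
    apply Ring.two_ne_zero
    intro h
    have := FiniteField.even_card_iff_char_two.1 h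
    rw [hK] at this
    have := Nat.odd_iff.1 hodd
    omega
  have h2L : (2:L) ≠ 0 := by
    have := (map_ne_zero (algebraMap K L)).2 h2
    rwa [map_ofNat] at this
  have h4L : (4:L) ≠ 0 := by
    have : (4:L) = 2 * 2 := by norm_num
    rw [this]; exact mul_ne_zero h2L h2L
  obtain ⟨σ, hσ⟩ : ∃ σ : L →ₐ[K] L, ∀ x, σ x = x ^ q :=
    ⟨FiniteField.frobeniusAlgHom K L, fun x => by simp [hK]⟩
  have hσ2 : ∀ x, σ (σ x) = x ^ (q^2) := fun x => by rw [hσ, hσ, ← pow_mul, sq]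
  have h3 : ∀ x, σ (σ (σ x)) = x := fun x => by
    rw [hσ, hσ2, ← pow_mul, ← pow_succ, ← hL, FiniteField.pow_card]
  have hfix : ∀ x, σ x = x → ∃ k, algebraMap K L k = x := fun x hx =>
    aux_fix x (by rw [hK, ← hσ, hx])
  have hR := aux_R h2 σ h3 hfix (by rw [hK, hL])
  have e1 := aux_equiv1 σ.toRingHom h3
  have e2 := aux_equiv2 h4L σ.toRingHom h3
  -- rewrite the set
  have hset : {N : L | ∃ u : K, u ≠ 0 ∧
      algebraMap K L (u ^ 2) =
        (N ^ (q ^ 2 + q + 1) - N - N ^ q - N ^ (q ^ 2)) ^ 2 + 8 * N ^ (q ^ 2 + q + 1) -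
          4 * (N ^ (q + 1) + N ^ (q ^ 2 + 1) + N ^ (q ^ 2 + q))} =
      {N : L | ∃ u : L, σ u = u ∧ u ≠ 0 ∧ u ^ 2 = auxD N (σ N) (σ (σ N))} := by
    ext N
    have hD : (N ^ (q ^ 2 + q + 1) - N - N ^ q - N ^ (q ^ 2)) ^ 2 + 8 * N ^ (q ^ 2 + q + 1) -
          4 * (N ^ (q + 1) + N ^ (q ^ 2 + 1) + N ^ (q ^ 2 + q)) = auxD N (σ N) (σ (σ N)) := by
      rw [hσ2, hσ, auxD]; ring
    simp only [Set.mem_ofPred_eq, hD]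
    constructor
    · rintro ⟨u, h0, h⟩
      exact ⟨algebraMap K L u, by simp, by simpa using h0, by rw [← h, map_pow]⟩
    · rintro ⟨u, hu, h0, h⟩
      obtain ⟨k, rfl⟩ := hfix u hu
      exact ⟨k, by simpa using h0, by rw [map_pow, h]⟩
  rw [hset]
  -- double count
  have hdouble : Nat.card {p : L × L | σ p.2 = p.2 ∧ p.2 ≠ 0 ∧ p.2^2 = auxD p.1 (σ p.1) (σ (σ p.1))} =
      2 * Nat.card {N : L | ∃ u : L, σ u = u ∧ u ≠ 0 ∧ u ^ 2 = auxD N (σ N) (σ (σ N))} := by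
    simp only [Nat.card_eq_fintype_card, ← Set.toFinset_card]
    rw [Finset.card_eq_sum_card_fiberwise (f := Prod.fst)
      (t := {N : L | ∃ u : L, σ u = u ∧ u ≠ 0 ∧ u ^ 2 = auxD N (σ N) (σ (σ N))}.toFinset)]
    · rw [Finset.sum_const_nat (m := 2), mul_comm]
      intro N hN
      simp only [Set.mem_toFinset, Set.mem_ofPred_eq] at hN
      obtain ⟨u, hu, h0, h⟩ := hN
      have hne : ((N, u) : L × L) ≠ (N, -u) := by
        intro he
        have := (Prod.ext_iff.1 he).2
        simp only at this
        have : 2 * u = 0 := by linear_combination this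
        exact mul_ne_zero h2L h0 this
      refine Eq.trans ?_ (Finset.card_pair hne)
      congr 1
      ext ⟨M, v⟩
      simp only [Finset.mem_filter, Set.mem_toFinset, Set.mem_ofPred_eq, Finset.mem_insert,
        Finset.mem_singleton, Prod.mk.injEq]
      constructor
      · rintro ⟨⟨hv, hv0, hv2⟩, rfl⟩
        rcases sq_eq_sq_iff_eq_or_eq_neg.1 (hv2.trans h.symm) with h' | h'
        · exact Or.inl ⟨rfl, h'⟩
        · exact Or.inr ⟨rfl, h'⟩
      · rintro (⟨rfl, rfl⟩ | ⟨rfl, rfl⟩)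
        · exact ⟨⟨hu, h0, h⟩, rfl⟩
        · exact ⟨⟨by rw [map_neg, hu], neg_ne_zero.2 h0, by rw [neg_sq, h]⟩, rfl⟩
    · rintro ⟨N, u⟩ hN
      simp only [Set.coe_toFinset, Set.mem_ofPred_eq] at hN ⊢
      exact ⟨u, hN⟩
  have hT : Nat.card {a : L | auxR a (σ a) (σ (σ a)) ≠ 1 ∧ a ≠ 0 ∧ a ≠ 1 ∧ a ≠ -1} + (q^2 + q) + 3 = q^3 := by
    rw [hK] at hR
    rw [← hR, ← hL]
    simp only [Nat.card_eq_fintype_card, ← Set.toFinset_card]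
    have hdisj : Disjoint {a : L | auxR a (σ a) (σ (σ a)) ≠ 1 ∧ a ≠ 0 ∧ a ≠ 1 ∧ a ≠ -1}.toFinset
        {a : L | auxR a (σ a) (σ (σ a)) = 1}.toFinset := by
      rw [Finset.disjoint_left]
      intro a ha hb
      simp only [Set.mem_toFinset, Set.mem_ofPred_eq] at ha hb
      exact ha.1 hb
    have h11 : (1:L) ≠ -1 := by
      intro h; apply h2L; linear_combination h
    have hthree : ({0, 1, -1} : Finset L).card = 3 := by
      rw [Finset.card_eq_three]
      exact ⟨0, 1, -1, by simp, by simp, h11, rfl⟩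
    have hR0 : ∀ a ∈ ({0, 1, -1} : Finset L), auxR a (σ a) (σ (σ a)) ≠ 1 := by
      intro a ha
      simp only [Finset.mem_insert, Finset.mem_singleton] at ha
      rcases ha with rfl | rfl | rfl
      · simp [auxR]
      · simp only [auxR, map_one]
        intro h; apply h4L; linear_combination -h
      · simp only [auxR, map_one, map_neg]
        intro h; apply h4L; linear_combination -h
    have hdisj2 : Disjoint ({a : L | auxR a (σ a) (σ (σ a)) ≠ 1 ∧ a ≠ 0 ∧ a ≠ 1 ∧ a ≠ -1}.toFinset ∪
        {a : L | auxR a (σ a) (σ (σ a)) = 1}.toFinset) ({0, 1, -1} : Finset L) := by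
      rw [Finset.disjoint_left]
      intro a ha hb
      have := hR0 a hb
      simp only [Finset.mem_union, Set.mem_toFinset, Set.mem_ofPred_eq, Finset.mem_insert,
        Finset.mem_singleton] at ha hb
      tauto
    rw [← hthree, ← Finset.card_union_of_disjoint hdisj, ← Finset.card_union_of_disjoint hdisj2,
      ← Finset.card_univ]
    congr 1
    ext a
    simp only [Finset.mem_union, Set.mem_toFinset, Set.mem_ofPred_eq, Finset.mem_insert,
        Finset.mem_singleton, Finset.mem_univ, iff_true]
    tauto
  have e1' : 2 * Nat.card {N : L | ∃ u : L, σ u = u ∧ u ≠ 0 ∧ u ^ 2 = auxD N (σ N) (σ (σ N))} =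
      Nat.card {a : L | auxR a (σ a) (σ (σ a)) ≠ 1 ∧ a ≠ 0 ∧ a ≠ 1 ∧ a ≠ -1} := by
    rw [← hdouble]; exact e1.trans e2
  omega
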